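/- Setting the logits z k = log (Pt k) for each class k, the negative log source posterior admits the logit-adjusted softmax form: -log (Ps j) = -log ( exp(z j + log (πs j) + log (ζ j)) / ∑ k, exp(z k + log (πs k) + log (ζ k)) ) for every class index j. -/

import Mathlib

open Real

/-!
The logarithm of Bayes' rule is additive, so adding the log prior ratio and the log density ratio to
the target logits turns them into the unnormalised source log posterior `log (fs k * πs k)`, up to
the log target evidence. The latter does not depend on the class, and softmax ignores it.
-/

/-- The posterior probability of class `j` given by Bayes' rule from the class-conditional densities
`f` and the class priors `p`. A positive rescaling of `p` changes nothing, so `p` need not sum to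
one; in particular the uniform prior may be given as the constant `1`. -/
noncomputable def classPosterior {ι : Type*} [Fintype ι] (f p : ι → ℝ) (j : ι) : ℝ :=
  f j * p j / ∑ k, f k * p k

/-- The softmax of the logits `z`: the probabilities proportional to `exp (z j)`. -/
noncomputable def softmax {ι : Type*} [Fintype ι] (z : ι → ℝ) (j : ι) : ℝ :=
  exp (z j) / ∑ k, exp (z k)

section

variable {ι : Type*} [Fintype ι]

theorem softmax_sub_const (z : ι → ℝ) (c : ℝ) : softmax (fun k => z k - c) = softmax z := by
  funext j
  simp only [softmax, exp_sub, ← Finset.sum_div]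
  exact div_div_div_cancel_right₀ (exp_ne_zero c) _ _

theorem softmax_log {w : ι → ℝ} (hw : ∀ k, 0 < w k) (j : ι) :
    softmax (fun k => log (w k)) j = w j / ∑ k, w k := by
  simp only [softmax, exp_log (hw _)]

theorem log_classPosterior {f p : ι → ℝ} (hf : ∀ k, 0 < f k) (hp : ∀ k, 0 < p k) (j : ι) :
    log (classPosterior f p j) = log (f j) + log (p j) - log (∑ k, f k * p k) := by
  have evidence_pos : 0 < ∑ k, f k * p k :=
    Finset.sum_pos (fun k _ => mul_pos (hf k) (hp k)) ⟨j, Finset.mem_univ j⟩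
  rw [classPosterior, log_div (mul_pos (hf j) (hp j)).ne' evidence_pos.ne',
    log_mul (hf j).ne' (hp j).ne']

variable {fs ft πs πt : ι → ℝ}

theorem log_classPosterior_add_log_ratios
    (hfs : ∀ k, 0 < fs k) (hft : ∀ k, 0 < ft k) (hπs : ∀ k, 0 < πs k) (hπt : ∀ k, 0 < πt k)
    (j : ι) :
    log (classPosterior ft πt j) + (log (πs j) - log (πt j)) + log (fs j / ft j) =
      log (fs j * πs j) - log (∑ k, ft k * πt k) := by
  rw [log_classPosterior hft hπt, log_div (hfs j).ne' (hft j).ne',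
    log_mul (hfs j).ne' (hπs j).ne']
  ring

theorem neg_log_source_posterior_logit_adjusted_general
    (hfs : ∀ k, 0 < fs k) (hft : ∀ k, 0 < ft k) (hπs : ∀ k, 0 < πs k) (hπt : ∀ k, 0 < πt k)
    (j : ι) :
    -log (classPosterior fs πs j) =
      -log (softmax (fun k =>
        log (classPosterior ft πt k) + (log (πs k) - log (πt k)) + log (fs k / ft k)) j) := by
  simp only [log_classPosterior_add_log_ratios hfs hft hπs hπt]
  rw [softmax_sub_const, softmax_log fun k => mul_pos (hfs k) (hπs k), classPosterior]

end

/-- With logits `z k = log (Pt k)`, the negative log source posterior admits the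
logit-adjusted softmax form. -/
theorem neg_log_source_posterior_logit_adjusted
    (K : ℕ) (hK : 1 ≤ K)
    (fs ft πs : Fin K → ℝ)
    (hfs : ∀ k, 0 < fs k) (hft : ∀ k, 0 < ft k) (hπs : ∀ k, 0 < πs k)
    (Ps Pt ζ z : Fin K → ℝ)
    (hPs : ∀ j, Ps j = fs j * πs j / (∑ k, fs k * πs k))
    (hPt : ∀ j, Pt j = ft j / (∑ k, ft k))
    (hζ : ∀ j, ζ j = fs j / ft j)
    (hz : ∀ k, z k = Real.log (Pt k)) :
    ∀ j, -Real.log (Ps j) =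
      -Real.log (Real.exp (z j + Real.log (πs j) + Real.log (ζ j)) /
        ∑ k, Real.exp (z k + Real.log (πs k) + Real.log (ζ k))) := by
  intro j
  simpa only [classPosterior, softmax, mul_one, log_one, sub_zero, hPs, hPt, hζ, hz] using
    neg_log_source_posterior_logit_adjusted_general hfs hft hπs (fun _ => one_pos) j
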